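/- Let p be a prime (p = 2 in case ε = −1), let r ≥ 0 and s ≥ 0 be integers, let ε = ±1, and consider the group G = ⟨a, b; b⁻¹a^{p^r}b = a^{ε p^r}⟩ with A and B the cyclic subgroups generated by a and b respectively, A₁ = A^{p^s}, and φ : A₁ → B the isomorphism defined by φ(a^{p^s}) = b. Then the family of all normal (A₁,B,φ)-compatible subgroups of G of finite p-power index is an (A₁,B)-filtration. -/

import Mathlib

/-- A subgroup `H` of `G` is `(A,B,φ)`-compatible if `φ(A ∩ H) = B ∩ H`. -/
def Compatible {G : Type*} [Group G] {A B : Subgroup G} (φ : A ≃* B) (H : Subgroup G) : Prop :=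
  (H.subgroupOf A).map φ.toMonoidHom = H.subgroupOf B

/-- The single relator `b⁻¹aˡb·a⁻ᵐ` of the Baumslag–Solitar group `G(l,m)`,
with `a = FreeGroup.of 0` and `b = FreeGroup.of 1`. -/
def bsRels (l m : ℤ) : Set (FreeGroup (Fin 2)) :=
  {(FreeGroup.of 1)⁻¹ * (FreeGroup.of 0) ^ l * FreeGroup.of 1 * ((FreeGroup.of 0) ^ m)⁻¹}

/-- The Baumslag–Solitar group `G(l,m) = ⟨a, b; b⁻¹aˡb = aᵐ⟩`. -/
def BS (l m : ℤ) : Type := PresentedGroup (bsRels l m)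

instance (l m : ℤ) : Group (BS l m) := by delta BS; infer_instance

/-- The generator `a` of `BS l m`. -/
def BS.a (l m : ℤ) : BS l m := PresentedGroup.of (0 : Fin 2)

/-- The generator `b` of `BS l m`. -/
def BS.b (l m : ℤ) : BS l m := PresentedGroup.of (1 : Fin 2)

/-! ### Basic facts on `BS` -/

theorem BS.rel (l m : ℤ) : (BS.b l m)⁻¹ * BS.a l m ^ l * BS.b l m = BS.a l m ^ m := by
  have h : PresentedGroup.mk (bsRels l m) ((FreeGroup.of 1)⁻¹ * (FreeGroup.of 0) ^ l *
      FreeGroup.of 1 * ((FreeGroup.of 0) ^ m)⁻¹) = 1 :=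
    PresentedGroup.one_of_mem (by simp [bsRels])
  rw [map_mul, map_inv, mul_inv_eq_one] at h
  simp only [map_mul, map_inv, map_zpow] at h
  exact h

theorem BS.exists_lift {l m : ℤ} {H : Type*} [Group H] (x y : H)
    (h : y⁻¹ * x ^ l * y = x ^ m) :
    ∃ f : BS l m →* H, f (BS.a l m) = x ∧ f (BS.b l m) = y := by
  have hr : ∀ w ∈ bsRels l m, FreeGroup.lift (![x, y]) w = 1 := by
    intro w hw
    rw [bsRels, Set.mem_singleton_iff] at hw
    subst hw
    simp [h]
  refine ⟨PresentedGroup.toGroup hr, ?_, ?_⟩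
  · exact PresentedGroup.toGroup.of hr
  · exact PresentedGroup.toGroup.of hr

theorem BS.ind {l m : ℤ} {P : BS l m → Prop} (h1 : P 1)
    (ha : ∀ g, P g → P (BS.a l m * g)) (ha' : ∀ g, P g → P ((BS.a l m)⁻¹ * g))
    (hb : ∀ g, P g → P (BS.b l m * g)) (hb' : ∀ g, P g → P ((BS.b l m)⁻¹ * g))
    (g : BS l m) : P g := by
  have hg : g ∈ Subgroup.closure (Set.range (PresentedGroup.of (rels := bsRels l m))) := by
    have := PresentedGroup.closure_range_of (bsRels l m)
    exact this ▸ Subgroup.mem_top (G := PresentedGroup (bsRels l m)) g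
  refine Subgroup.closure_induction_left (G := PresentedGroup (bsRels l m))
    (p := fun x _ => P x) h1 ?_ ?_ hg
  · rintro _ ⟨i, rfl⟩ y _ hy
    fin_cases i
    · exact ha y hy
    · exact hb y hy
  · rintro _ ⟨i, rfl⟩ y _ hy
    fin_cases i
    · exact ha' y hy
    · exact hb' y hy

/-! ### Subgroups of `p`-power index -/

theorem inf_index_pow {G : Type*} [Group G] {p : ℕ} (hp : p.Prime) {M K : Subgroup G}
    (hM : M.Normal) {i j : ℕ} (hi : M.index = p ^ i) (hj : K.index = p ^ j) :
    ∃ k : ℕ, (M ⊓ K).index = p ^ k := by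
  have h1 : M.relIndex K ∣ p ^ i := hi ▸ Subgroup.relIndex_dvd_index_of_normal M K
  obtain ⟨t, -, ht⟩ := (Nat.dvd_prime_pow hp).1 h1
  refine ⟨t + j, ?_⟩
  have h2 := Subgroup.relIndex_mul_index (H := M ⊓ K) (K := K) inf_le_right
  rw [Subgroup.inf_relIndex_right, ht, hj] at h2
  rw [← h2, pow_add]

theorem comap_index_pow {G H : Type*} [Group G] [Group H] {p : ℕ} (hp : p.Prime)
    (f : G →* H) {M : Subgroup H}
    (hM : M.Normal) {i : ℕ} (hi : M.index = p ^ i) :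
    ∃ k : ℕ, (M.comap f).index = p ^ k := by
  have h1 : M.relIndex f.range ∣ p ^ i := hi ▸ Subgroup.relIndex_dvd_index_of_normal M _
  obtain ⟨t, -, ht⟩ := (Nat.dvd_prime_pow hp).1 h1
  exact ⟨t, by rw [Subgroup.index_comap, ht]⟩

theorem ker_index_pow {G H : Type*} [Group G] [Group H] [Finite H] {p : ℕ} (hp : p.Prime)
    (f : G →* H) (h : ∀ g : G, ∃ k : ℕ, f g ^ p ^ k = 1) :
    ∃ k : ℕ, f.ker.index = p ^ k := by
  have := Fact.mk hp
  have h1 : IsPGroup p f.range := by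
    rintro ⟨_, g, rfl⟩
    obtain ⟨k, hk⟩ := h g
    exact ⟨k, Subtype.ext hk⟩
  obtain ⟨k, hk⟩ := IsPGroup.iff_card.1 h1
  exact ⟨k, by rw [Subgroup.index_ker, hk]⟩

/-- The metacyclic quotients. -/
theorem BS.exists_K {p : ℕ} (hp : p.Prime) (r : ℕ) {ε : ℤ} (hε : ε = 1 ∨ ε = -1)
    (hp2 : ε = -1 → p = 2) {l m : ℤ} (hl : l = (p : ℤ) ^ r) (hm : m = ε * (p : ℤ) ^ r)
    (u n : ℕ) (hn : 1 ≤ n) :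
    ∃ K : Subgroup (BS l m), K.Normal ∧ (∃ k : ℕ, K.index = p ^ k) ∧
      ∀ i j : ℤ, BS.a l m ^ i * BS.b l m ^ j ∈ K ↔ (p : ℤ) ^ u ∣ i ∧ (p : ℤ) ^ n ∣ j := by
  have : NeZero (p ^ u) := ⟨pow_ne_zero _ hp.ne_zero⟩
  have : NeZero (p ^ n) := ⟨pow_ne_zero _ hp.ne_zero⟩
  rcases hε with rfl | rfl
  · obtain ⟨f, fa, fb⟩ := BS.exists_lift (l := l) (m := m)
      (H := Multiplicative (ZMod (p ^ u) × ZMod (p ^ n)))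
      (Multiplicative.ofAdd (1, 0)) (Multiplicative.ofAdd (0, 1)) (by
        rw [hl, hm, one_mul, mul_comm, mul_inv_cancel_left])
    refine ⟨f.ker, inferInstance, ker_index_pow hp f ?_, ?_⟩
    · intro g
      refine ⟨u + n, ?_⟩
      have hc : ∀ z : Multiplicative (ZMod (p ^ u) × ZMod (p ^ n)), z ^ (p ^ (u + n)) = 1 := by
        intro z
        have : Nat.card (Multiplicative (ZMod (p ^ u) × ZMod (p ^ n))) = p ^ (u + n) := by
          rw [Nat.card_congr Multiplicative.toAdd, Nat.card_prod, Nat.card_zmod, Nat.card_zmod,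
            pow_add]
        rw [← this]; exact pow_card_eq_one'
      exact hc _
    · intro i j
      rw [MonoidHom.mem_ker, map_mul, map_zpow, map_zpow, fa, fb, ← ofAdd_zsmul, ← ofAdd_zsmul,
        ← ofAdd_add, ofAdd_eq_one]
      have e1 := ZMod.intCast_zmod_eq_zero_iff_dvd i (p ^ u)
      have e2 := ZMod.intCast_zmod_eq_zero_iff_dvd j (p ^ n)
      push_cast at e1 e2
      rw [← e1, ← e2]
      simp [Prod.ext_iff]
  · obtain rfl := hp2 rfl
    obtain ⟨f, fa, fb⟩ := BS.exists_lift (l := l) (m := m)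
      (H := DihedralGroup (2 ^ u) × Multiplicative (ZMod (2 ^ n)))
      (DihedralGroup.r 1, 1) (DihedralGroup.sr 0, Multiplicative.ofAdd 1) (by
        rw [hl, hm]
        ext
        · simp [DihedralGroup.r_zpow]
        · simp)
    refine ⟨f.ker, inferInstance, ker_index_pow hp f ?_, ?_⟩
    · intro g
      refine ⟨u + 1 + n, ?_⟩
      have hc : ∀ z : DihedralGroup (2 ^ u) × Multiplicative (ZMod (2 ^ n)),
          z ^ (2 ^ (u + 1 + n)) = 1 := by
        intro z
        have : Nat.card (DihedralGroup (2 ^ u) × Multiplicative (ZMod (2 ^ n)))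
            = 2 ^ (u + 1 + n) := by
          rw [Nat.card_prod, DihedralGroup.nat_card, Nat.card_congr Multiplicative.toAdd,
            Nat.card_zmod]
          ring
        rw [← this]; exact pow_card_eq_one'
      exact hc _
    · intro i j
      rw [MonoidHom.mem_ker, map_mul, map_zpow, map_zpow, fa, fb]
      have e1 := ZMod.intCast_zmod_eq_zero_iff_dvd i (2 ^ u)
      have e2 := ZMod.intCast_zmod_eq_zero_iff_dvd j (2 ^ n)
      push_cast at e1 e2 ⊢
      rw [← e1, ← e2, Prod.ext_iff]
      have e3 : (Multiplicative.ofAdd (1 : ZMod (2 ^ n))) ^ j = 1 ↔ (j : ZMod (2 ^ n)) = 0 := by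
        rw [← ofAdd_zsmul, ofAdd_eq_one]; simp
      simp only [Prod.fst_mul, Prod.snd_mul, Prod.fst_one, Prod.snd_one, one_zpow, one_mul,
        Prod.pow_fst, Prod.pow_snd, e3]
      refine and_congr_left ?_
      intro hj
      have h2 : (2 : ℤ) ∣ j := (dvd_pow_self 2 (by omega)).trans (e2.1 hj)
      obtain ⟨t, rfl⟩ := h2
      have : (DihedralGroup.sr (0 : ZMod (2 ^ u))) ^ (2 * t) = 1 := by
        rw [zpow_mul]
        have : (DihedralGroup.sr (0 : ZMod (2 ^ u))) ^ (2 : ℤ) = 1 := by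
          rw [zpow_ofNat, pow_two, DihedralGroup.sr_mul_self]
        rw [this, one_zpow]
      rw [this, mul_one, DihedralGroup.r_one_zpow, DihedralGroup.one_def, DihedralGroup.r.injEq]

/-! ### A matrix representation of `ℤ/q * ℤ` -/

section Rep

variable (R : Type*) [CommRing R] (q : ℕ) [NeZero q]

/-- The translation by `i` on functions on `ℤ/q × {±}`. -/
def bsTrans (i : ZMod q) : Module.End R (ZMod q × Bool → R) :=
  LinearMap.funLeft R R (fun x => (x.1 - i, x.2))

/-- Translations, as a homomorphism. -/
def bsTransHom : Multiplicative (ZMod q) →* Module.End R (ZMod q × Bool → R) where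
  toFun i := bsTrans R q i.toAdd
  map_one' := by
    ext : 1
    simp [bsTrans]
    rfl
  map_mul' i j := by
    refine LinearMap.ext fun f => funext fun x => ?_
    simp [bsTrans, LinearMap.funLeft_apply, sub_sub]

/-- The linear forms `v_s`. -/
def bsForm (s : Bool) : (ZMod q × Bool → R) →ₗ[R] R :=
  (∑ x : ZMod q × Bool, LinearMap.proj (R := R) (φ := fun _ : ZMod q × Bool => R) x) -
    LinearMap.proj (R := R) (φ := fun _ : ZMod q × Bool => R) (0, !s)

/-- The vectors `u_s`. -/
def bsVec (s : Bool) : ZMod q × Bool → R := Pi.single (0, s) 1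

/-- The rank one projections. -/
def bsProj (s : Bool) : Module.End R (ZMod q × Bool → R) :=
  (bsForm R q s).smulRight (bsVec R q s)

variable {R q}

theorem bsForm_apply (s : Bool) (f : ZMod q × Bool → R) :
    bsForm R q s f = ∑ x, f x - f (0, !s) := by
  simp [bsForm]

theorem bsForm_single (s t : Bool) (i : ZMod q) (h : i ≠ 0 ∨ s = t) :
    bsForm R q s (Pi.single (i, t) 1) = 1 := by
  rw [bsForm_apply, Finset.sum_pi_single', if_pos (Finset.mem_univ _), Pi.single_apply, if_neg,
    sub_zero]
  intro h'
  rw [Prod.mk.injEq] at h'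
  rcases h with h | h
  · exact h h'.1.symm
  · subst h; simp at h'

theorem bsForm_vec_ne (s : Bool) : bsForm R q s (bsVec R q (!s)) = 0 := by
  rw [bsForm_apply, bsVec, Finset.sum_pi_single', if_pos (Finset.mem_univ _)]
  simp

theorem bsForm_vec_ne' (s : Bool) : bsForm R q (!s) (bsVec R q s) = 0 := by
  simpa using bsForm_vec_ne (R := R) (q := q) (!s)

theorem bsForm_vec (s : Bool) : bsForm R q s (bsVec R q s) = 1 :=
  bsForm_single s s 0 (Or.inr rfl)

theorem bsTrans_single (i j : ZMod q) (t : Bool) (c : R) :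
    bsTrans R q i (Pi.single (j, t) c) = Pi.single (i + j, t) c := by
  funext x
  obtain ⟨x, b⟩ := x
  simp only [bsTrans, LinearMap.funLeft_apply, Pi.single_apply, Prod.mk.injEq, sub_eq_iff_eq_add,
    add_comm]

/-- The endomorphism with eigenvalue `τ⁻¹` on `u_s`, and `τ` on `u_{-s}`. -/
def bsBeta (τ : Rˣ) (s : Bool) : Module.End R (ZMod q × Bool → R) :=
  1 + ((↑τ⁻¹ : R) - 1) • bsProj R q s + ((τ : R) - 1) • bsProj R q (!s)

theorem bsBeta_apply (τ : Rˣ) (s : Bool) (f : ZMod q × Bool → R) :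
    bsBeta τ s f = f + (((↑τ⁻¹ : R) - 1) * bsForm R q s f) • bsVec R q s
      + (((τ : R) - 1) * bsForm R q (!s) f) • bsVec R q (!s) := by
  simp [bsBeta, bsProj, smul_smul]

theorem bsBeta_mul (τ : Rˣ) (s : Bool) :
    (bsBeta τ s * bsBeta τ (!s) : Module.End R (ZMod q × Bool → R)) = 1 := by
  refine LinearMap.ext fun f => ?_
  have hτ : (τ : R) * (↑τ⁻¹ : R) = 1 := by simp
  rw [Module.End.mul_apply, bsBeta_apply, bsBeta_apply]
  simp only [map_add, map_smul, bsForm_vec, bsForm_vec_ne, bsForm_vec_ne', Bool.not_not,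
    smul_eq_mul, Module.End.one_apply]
  generalize bsForm R q s f = c
  generalize bsForm R q (!s) f = d
  generalize bsVec R q s = u
  generalize bsVec R q (!s) = v
  funext x
  simp only [Pi.add_apply, Pi.smul_apply, smul_eq_mul]
  linear_combination (c * u x + d * v x) * hτ

/-- `bsBeta` as a unit. -/
def bsBetaU (τ : Rˣ) (s : Bool) : (Module.End R (ZMod q × Bool → R))ˣ where
  val := bsBeta τ s
  inv := bsBeta τ (!s)
  val_inv := bsBeta_mul τ s
  inv_val := by simpa using bsBeta_mul (q := q) τ (!s)

/-- Translations as units. -/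
def bsAlphaU (R : Type*) [CommRing R] (q : ℕ) [NeZero q] :
    Multiplicative (ZMod q) →* (Module.End R (ZMod q × Bool → R))ˣ :=
  (bsTransHom R q).toHomUnits

theorem exists_bsRep (τ : Rˣ) {ε l m : ℤ} (hl : l = q) (hm : m = ε * q) :
    ∃ f : BS l m →* (Module.End R (ZMod q × Bool → R))ˣ,
      (∀ k : ℤ, (f (BS.a l m ^ k) : Module.End R (ZMod q × Bool → R)) = bsTrans R q k) ∧
      (∀ s : Bool, (f (cond s (BS.b l m) (BS.b l m)⁻¹) : Module.End R (ZMod q × Bool → R))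
        = bsBeta τ s) := by
  obtain ⟨f, fa, fb⟩ := BS.exists_lift (l := l) (m := m) (bsAlphaU R q (Multiplicative.ofAdd 1))
    (bsBetaU τ true) (by
      rw [← map_zpow (bsAlphaU R q), ← map_zpow (bsAlphaU R q), ← ofAdd_zsmul, ← ofAdd_zsmul, hl, hm]
      simp)
  refine ⟨f, ?_, ?_⟩
  · intro k
    rw [map_zpow, fa, ← map_zpow, ← ofAdd_zsmul]
    simp [bsAlphaU, bsTransHom]
  · intro s
    cases s
    · simp only [cond_false, map_inv, fb]
      rfl
    · simp only [cond_true, fb]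
      rfl

end Rep

/-! ### The image is a `p`-group -/

theorem one_add_pow_aux {E : Type*} [Ring E] (z : E) (n : ℕ) :
    ∃ W : E, (1 + z) ^ n = 1 + n * z + z * z * W := by
  induction n with
  | zero => exact ⟨0, by simp⟩
  | succ n ih =>
    obtain ⟨W, hW⟩ := ih
    refine ⟨n + W * (1 + z), ?_⟩
    rw [pow_succ, hW]
    have : (n : E) * z = z * n := (Nat.cast_commute n z).eq
    push_cast
    simp only [add_mul, mul_add, one_mul, mul_one, mul_assoc]
    rw [this, ← mul_assoc (n : E) z z, this, mul_assoc z (n : E) z, this]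
    abel

theorem one_add_p_pow {E : Type*} [Ring E] (p : ℕ) (Y : E) (k : ℕ) :
    ∃ W : E, (1 + p * Y) ^ p ^ k = 1 + (p ^ (k + 1) : ℕ) * W := by
  induction k with
  | zero => exact ⟨Y, by simp⟩
  | succ k ih =>
    obtain ⟨W, hW⟩ := ih
    obtain ⟨W', hW'⟩ := one_add_pow_aux (((p ^ (k + 1) : ℕ) : E) * W) p
    refine ⟨W + (p ^ k : ℕ) * (W * W * W'), ?_⟩
    rw [pow_succ, pow_mul, hW, hW', mul_add, add_assoc]
    congr 1
    congr 1
    · rw [← mul_assoc, ← Nat.cast_mul, ← pow_succ']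
    · have h1 : W * ((p ^ (k + 1) : ℕ) : E) = ((p ^ (k + 1) : ℕ) : E) * W :=
        (Nat.cast_commute _ W).eq.symm
      rw [mul_assoc ((p ^ (k + 1) : ℕ) : E) W, ← mul_assoc W _ W, h1]
      simp only [← mul_assoc]
      rw [← Nat.cast_mul, ← Nat.cast_mul, ← pow_add, ← pow_add]
      congr 5
      ring

theorem bsRep_pgroup {p M : ℕ} (r : ℕ) [NeZero (p ^ r)] {l m : ℤ} (τ : (ZMod (p ^ M))ˣ)
    (hτ : (τ : ZMod (p ^ M)) = 1 + p)
    (f : BS l m →* (Module.End (ZMod (p ^ M)) (ZMod (p ^ r) × Bool → ZMod (p ^ M)))ˣ)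
    (fa : ∀ k : ℤ, (f (BS.a l m ^ k) :
      Module.End (ZMod (p ^ M)) (ZMod (p ^ r) × Bool → ZMod (p ^ M))) = bsTrans (ZMod (p ^ M)) (p ^ r) k)
    (fb : ∀ s : Bool, (f (cond s (BS.b l m) (BS.b l m)⁻¹) :
      Module.End (ZMod (p ^ M)) (ZMod (p ^ r) × Bool → ZMod (p ^ M))) = bsBeta τ s)
    (g : BS l m) : ∃ k : ℕ, f g ^ p ^ k = 1 := by
  have fa0 : ∀ i k : ℤ, bsTrans (ZMod (p ^ M)) (p ^ r) i * bsTrans (ZMod (p ^ M)) (p ^ r) k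
      = bsTrans (ZMod (p ^ M)) (p ^ r) ((i + k : ℤ) : ZMod (p ^ r)) := by
    intro i k
    rw [← fa, ← fa, ← fa, zpow_add, map_mul, Units.val_mul]
  have hP : ∀ (X Y : Module.End (ZMod (p ^ M)) (ZMod (p ^ r) × Bool → ZMod (p ^ M))),
      X * (p * Y) = p * (X * Y) := by
    intro X Y
    rw [← mul_assoc, ← (Nat.cast_commute p X).eq, mul_assoc]
  have hβ : ∀ s : Bool, ∃ Z, (bsBeta τ s :
      Module.End (ZMod (p ^ M)) (ZMod (p ^ r) × Bool → ZMod (p ^ M))) = 1 + p * Z := by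
    intro s
    refine ⟨(-(↑τ⁻¹ : ZMod (p ^ M))) • bsProj _ _ s + bsProj _ _ (!s), ?_⟩
    have h1 : (↑τ⁻¹ : ZMod (p ^ M)) - 1 = p * (-(↑τ⁻¹ : ZMod (p ^ M))) := by
      have : (τ : ZMod (p ^ M)) * (↑τ⁻¹ : ZMod (p ^ M)) = 1 := by simp
      rw [hτ] at this
      linear_combination this
    have h2 : (τ : ZMod (p ^ M)) - 1 = p := by rw [hτ]; ring
    have h3 : ∀ X : Module.End (ZMod (p ^ M)) (ZMod (p ^ r) × Bool → ZMod (p ^ M)),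
        (p : ZMod (p ^ M)) • X = p * X := by
      intro X
      rw [Nat.cast_smul_eq_nsmul, nsmul_eq_mul]
    rw [bsBeta, h1, h2, mul_smul, h3, h3, mul_add, add_assoc]
  have key : ∀ g : BS l m, ∃ (i : ℤ) (Y : Module.End (ZMod (p ^ M)) (ZMod (p ^ r) × Bool → ZMod (p ^ M))), (f g : Module.End (ZMod (p ^ M)) (ZMod (p ^ r) × Bool → ZMod (p ^ M)))
      = bsTrans (ZMod (p ^ M)) (p ^ r) i + p * Y := by
    have hA : ∀ (k : ℤ) (g : BS l m), (∃ (i : ℤ) (Y : Module.End (ZMod (p ^ M)) (ZMod (p ^ r) × Bool → ZMod (p ^ M))), (f g : Module.End (ZMod (p ^ M)) (ZMod (p ^ r) × Bool → ZMod (p ^ M)))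
        = bsTrans (ZMod (p ^ M)) (p ^ r) i + p * Y) →
        (∃ (i : ℤ) (Y : Module.End (ZMod (p ^ M)) (ZMod (p ^ r) × Bool → ZMod (p ^ M))), (f (BS.a l m ^ k * g) : Module.End (ZMod (p ^ M)) (ZMod (p ^ r) × Bool → ZMod (p ^ M)))
        = bsTrans (ZMod (p ^ M)) (p ^ r) i + p * Y) := by
      rintro k g ⟨i, Y, h⟩
      refine ⟨k + i, bsTrans _ _ k * Y, ?_⟩
      rw [map_mul, Units.val_mul, h, fa, mul_add, fa0, hP]
    have hB : ∀ (s : Bool) (g : BS l m), (∃ (i : ℤ) (Y : Module.End (ZMod (p ^ M)) (ZMod (p ^ r) × Bool → ZMod (p ^ M))), (f g : Module.End (ZMod (p ^ M)) (ZMod (p ^ r) × Bool → ZMod (p ^ M)))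
        = bsTrans (ZMod (p ^ M)) (p ^ r) i + p * Y) →
        (∃ (i : ℤ) (Y : Module.End (ZMod (p ^ M)) (ZMod (p ^ r) × Bool → ZMod (p ^ M))),
          (f (cond s (BS.b l m) (BS.b l m)⁻¹ * g) : Module.End (ZMod (p ^ M)) (ZMod (p ^ r) × Bool → ZMod (p ^ M)))
        = bsTrans (ZMod (p ^ M)) (p ^ r) i + p * Y) := by
      rintro s g ⟨i, Y, h⟩
      obtain ⟨Z, hZ⟩ := hβ s
      refine ⟨i, Y + Z * (bsTrans (ZMod (p ^ M)) (p ^ r) i + p * Y), ?_⟩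
      rw [map_mul, Units.val_mul, h, fb, hZ, add_mul, one_mul, mul_assoc, mul_add (p : Module.End _ _) Y,
        add_assoc]
    refine BS.ind ?_ ?_ ?_ ?_ ?_
    · refine ⟨0, 0, ?_⟩
      rw [← fa, zpow_zero, mul_zero, add_zero]
    · intro g h; simpa using hA 1 g h
    · intro g h; simpa using hA (-1) g h
    · intro g h; exact hB true g h
    · intro g h; exact hB false g h
  have hpow : ∀ n : ℕ, ∀ (i : ℤ) (Y : Module.End (ZMod (p ^ M)) (ZMod (p ^ r) × Bool → ZMod (p ^ M))), ∃ Y',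
      (bsTrans (ZMod (p ^ M)) (p ^ r) i + p * Y) ^ n
        = bsTrans (ZMod (p ^ M)) (p ^ r) ((n * i : ℤ) : ZMod (p ^ r)) + p * Y' := by
    intro n i Y
    induction n with
    | zero =>
      refine ⟨0, ?_⟩
      rw [pow_zero, ← fa, Nat.cast_zero, zero_mul, zpow_zero, mul_zero, add_zero, map_one]
      rfl
    | succ n ih =>
      obtain ⟨Y', h'⟩ := ih
      refine ⟨bsTrans (ZMod (p ^ M)) (p ^ r) ((n * i : ℤ) : ZMod (p ^ r)) * Y
        + Y' * (bsTrans (ZMod (p ^ M)) (p ^ r) i +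
          (p : Module.End (ZMod (p ^ M)) (ZMod (p ^ r) × Bool → ZMod (p ^ M))) * Y), ?_⟩
      rw [pow_succ, h', add_mul, mul_add, fa0, hP, mul_assoc, add_assoc, ← mul_add]
      have e : (n * i + i : ℤ) = ((n + 1 : ℕ) : ℤ) * i := by push_cast; ring
      rw [e]
  obtain ⟨i, Y, hY⟩ := key g
  obtain ⟨Y', hY'⟩ := hpow (p ^ r) i Y
  obtain ⟨W, hW⟩ := one_add_p_pow p Y' M
  refine ⟨r + M, Units.ext ?_⟩
  have h0 : bsTrans (ZMod (p ^ M)) (p ^ r) (((p ^ r : ℕ) * i : ℤ) : ZMod (p ^ r)) = 1 := by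
    have : (((p ^ r : ℕ) * i : ℤ) : ZMod (p ^ r)) = ((0 : ℤ) : ZMod (p ^ r)) := by
      rw [Int.cast_mul, Int.cast_natCast, ZMod.natCast_self]; simp
    rw [this, ← fa]; simp
  have hz : ((p ^ (M + 1) : ℕ) : Module.End (ZMod (p ^ M)) (ZMod (p ^ r) × Bool → ZMod (p ^ M)))
      = 0 := by
    refine LinearMap.ext fun v => ?_
    rw [Module.End.natCast_apply, ← Nat.cast_smul_eq_nsmul (ZMod (p ^ M)), pow_succ, Nat.cast_mul,
      ZMod.natCast_self]
    simp
  rw [Units.val_pow_eq_pow_val, hY, pow_add, pow_mul, hY', h0, hW, hz]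
  simp

/-! ### Normal forms -/

/-- Reduced words beginning with `b` (`s = true`) or `b⁻¹` (`s = false`). -/
inductive BSWord (q : ℕ) (l m : ℤ) : Bool → BS l m → Prop
  | base (s : Bool) (k : ℤ) : BSWord q l m s (cond s (BS.b l m) (BS.b l m)⁻¹ * BS.a l m ^ k)
  | same (s : Bool) (g : BS l m) : BSWord q l m s g →
      BSWord q l m s (cond s (BS.b l m) (BS.b l m)⁻¹ * g)
  | alt (s t : Bool) (i : ℤ) (g : BS l m) : ¬ (q : ℤ) ∣ i → BSWord q l m t g →
      BSWord q l m s (cond s (BS.b l m) (BS.b l m)⁻¹ * (BS.a l m ^ i * g))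

theorem BS.conj_pow {q : ℕ} {ε l m : ℤ} (hε : ε = 1 ∨ ε = -1) (hl : l = q) (hm : m = ε * q)
    (s : Bool) {k : ℤ} (hk : (q : ℤ) ∣ k) :
    cond s (BS.b l m) (BS.b l m)⁻¹ * BS.a l m ^ k
      = BS.a l m ^ (ε * k) * cond s (BS.b l m) (BS.b l m)⁻¹ := by
  have h := BS.rel l m
  obtain ⟨j, rfl⟩ := hk
  have hc : ∀ j : ℤ, (BS.b l m)⁻¹ * BS.a l m ^ (q * j : ℤ) * BS.b l m
      = BS.a l m ^ (ε * (q * j)) := by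
    intro j
    have h2 := congrArg (fun x => x ^ j) h
    beta_reduce at h2
    have h3 : ((BS.b l m)⁻¹ * BS.a l m ^ l * BS.b l m) ^ j
        = (BS.b l m)⁻¹ * (BS.a l m ^ l) ^ j * BS.b l m := by
      have := conj_zpow (i := j) (a := (BS.b l m)⁻¹) (b := BS.a l m ^ l)
      rwa [inv_inv] at this
    rw [h3, ← zpow_mul, ← zpow_mul] at h2
    have e1 : l * j = q * j := by rw [hl]
    have e2 : m * j = ε * (q * j) := by rw [hm]; ring
    rw [← e2, ← e1]
    exact h2
  cases s
  · simp only [cond_false]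
    rw [← hc j]
    group
  · simp only [cond_true]
    have h4 := hc (ε * j)
    have e3 : ε * (q * (ε * j)) = q * j := by
      rcases hε with rfl | rfl <;> ring
    have e4 : (q : ℤ) * (ε * j) = ε * (q * j) := by ring
    rw [e3, e4] at h4
    rw [← h4]
    group

theorem BS.cover {q : ℕ} {ε l m : ℤ} (hε : ε = 1 ∨ ε = -1) (hl : l = q) (hm : m = ε * q)
    (g : BS l m) :
    (∃ k : ℤ, g = BS.a l m ^ k) ∨
      ∃ (s : Bool) (i : ℤ) (g' : BS l m), BSWord q l m s g' ∧ g = BS.a l m ^ i * g' := by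
  have hA : ∀ (k : ℤ) (g : BS l m), ((∃ k : ℤ, g = BS.a l m ^ k) ∨
      ∃ (s : Bool) (i : ℤ) (g' : BS l m), BSWord q l m s g' ∧ g = BS.a l m ^ i * g') →
      ((∃ k' : ℤ, BS.a l m ^ k * g = BS.a l m ^ k') ∨
      ∃ (s : Bool) (i : ℤ) (g' : BS l m), BSWord q l m s g' ∧
        BS.a l m ^ k * g = BS.a l m ^ i * g') := by
    rintro k g (⟨j, rfl⟩ | ⟨s, i, g', hg', rfl⟩)
    · exact Or.inl ⟨k + j, (zpow_add _ _ _).symm⟩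
    · exact Or.inr ⟨s, k + i, g', hg', by rw [zpow_add, mul_assoc]⟩
  have hB : ∀ (s : Bool) (g : BS l m), ((∃ k : ℤ, g = BS.a l m ^ k) ∨
      ∃ (s : Bool) (i : ℤ) (g' : BS l m), BSWord q l m s g' ∧ g = BS.a l m ^ i * g') →
      ((∃ k' : ℤ, cond s (BS.b l m) (BS.b l m)⁻¹ * g = BS.a l m ^ k') ∨
      ∃ (t : Bool) (i : ℤ) (g' : BS l m), BSWord q l m t g' ∧
        cond s (BS.b l m) (BS.b l m)⁻¹ * g = BS.a l m ^ i * g') := by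
    rintro s g (⟨j, rfl⟩ | ⟨t, i, g', hg', rfl⟩)
    · exact Or.inr ⟨s, 0, _, BSWord.base s j, by simp⟩
    · by_cases hi : (q : ℤ) ∣ i
      · rw [← mul_assoc, BS.conj_pow hε hl hm s hi, mul_assoc]
        refine hA _ _ ?_
        by_cases hst : s = t
        · subst hst
          exact Or.inr ⟨s, 0, _, BSWord.same s _ hg', by simp⟩
        · have hc : cond s (BS.b l m) (BS.b l m)⁻¹ * cond t (BS.b l m) (BS.b l m)⁻¹ = 1 := by
            cases s <;> cases t <;> simp_all
          cases hg' with
          | base _ k => exact Or.inl ⟨k, by rw [← mul_assoc, hc, one_mul]⟩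
          | same _ g hg =>
            exact Or.inr ⟨t, 0, g, hg, by rw [← mul_assoc, hc, one_mul, zpow_zero, one_mul]⟩
          | alt _ t' i' g _ hg =>
            exact Or.inr ⟨t', i', g, hg, by rw [← mul_assoc, hc, one_mul]⟩
      · exact Or.inr ⟨s, 0, _, BSWord.alt s t i g' hi hg', by simp⟩
  refine BS.ind (P := fun g => (∃ k : ℤ, g = BS.a l m ^ k) ∨
      ∃ (s : Bool) (i : ℤ) (g' : BS l m), BSWord q l m s g' ∧ g = BS.a l m ^ i * g')
    (Or.inl ⟨0, by simp⟩) ?_ ?_ (hB true) (hB false) g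
  · intro g h; simpa using hA 1 g h
  · intro g h; simpa using hA (-1) g h

theorem bsForm_cast {R : Type*} [CommRing R] {q : ℕ} [NeZero q] (s : Bool)
    (z : ZMod q × Bool → ℤ) :
    bsForm R q s (fun x => (z x : R)) = ((bsForm ℤ q s z : ℤ) : R) := by
  rw [bsForm_apply, bsForm_apply]
  push_cast
  rfl

theorem bsVec_cast {R : Type*} [CommRing R] {q : ℕ} [NeZero q] (s : Bool) (x : ZMod q × Bool) :
    bsVec R q s x = ((bsVec ℤ q s x : ℤ) : R) := by
  rw [bsVec, bsVec, Pi.single_apply, Pi.single_apply]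
  split <;> simp

/-- One step of the ping-pong argument. -/
theorem bs_step {q : ℕ} [NeZero q] (T : ℤ) (s : Bool) (z : ZMod q × Bool → ℤ) (c : ℤ)
    (hc : bsForm ℤ q s z = 1 + T * c) :
    ∃ y : ZMod q × Bool → ℤ, ∀ (R : Type) [CommRing R] (τ : Rˣ), (τ : R) = (T : R) →
      (T : R) • bsBeta τ s (fun x => (z x : R))
        = fun x => ((bsVec ℤ q s x + T * y x : ℤ) : R) := by
  refine ⟨fun x => z x + (T - 1) * bsForm ℤ q (!s) z * bsVec ℤ q (!s) x
    - bsForm ℤ q s z * bsVec ℤ q s x + c * bsVec ℤ q s x, ?_⟩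
  intro R _ τ hτ
  have hτ' : (T : R) * (↑τ⁻¹ : R) = 1 := by rw [← hτ]; simp
  rw [bsBeta_apply, bsForm_cast, bsForm_cast, hc]
  funext x
  simp only [Pi.add_apply, Pi.smul_apply, smul_eq_mul, bsVec_cast (R := R), hτ]
  push_cast
  linear_combination (1 + (T : R) * c) * (bsVec ℤ q s x : R) * hτ'

theorem bs_good {q : ℕ} [NeZero q] {l m T : ℤ} {R : ℕ → Type} [∀ M, CommRing (R M)]
    (τ : ∀ M, (R M)ˣ) (hτ : ∀ M, (τ M : R M) = (T : R M))
    (f : ∀ M, BS l m →* (Module.End (R M) (ZMod q × Bool → R M))ˣ)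
    (fa : ∀ M, ∀ k : ℤ, (f M (BS.a l m ^ k) :
      Module.End (R M) (ZMod q × Bool → R M)) = bsTrans (R M) q k)
    (fb : ∀ M, ∀ s : Bool, (f M (cond s (BS.b l m) (BS.b l m)⁻¹) :
      Module.End (R M) (ZMod q × Bool → R M)) = bsBeta (τ M) s)
    {s : Bool} {g : BS l m} (hg : BSWord q l m s g) :
    ∃ (D : ℕ) (x y : ZMod q × Bool → ℤ), 0 < D ∧ ∀ M,
      (T : R M) ^ D • (f M g : Module.End (R M) (ZMod q × Bool → R M)) (fun i => (x i : R M))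
        = fun i => ((bsVec ℤ q s i + T * y i : ℤ) : R M) := by
  induction hg with
  | base s k =>
    obtain ⟨y, hy⟩ := bs_step (q := q) T s (bsVec ℤ q s) 0 (by rw [bsForm_vec]; simp)
    refine ⟨1, Pi.single (-(k : ZMod q), s) 1, y, one_pos, fun M => ?_⟩
    rw [← hy (R M) (τ M) (hτ M), map_mul, Units.val_mul, Module.End.mul_apply, fa, fb, pow_one]
    congr 2
    have : (fun i => ((Pi.single (-(k : ZMod q), s) (1 : ℤ) : ZMod q × Bool → ℤ) i : R M))
        = Pi.single (-(k : ZMod q), s) 1 := by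
      funext i
      rw [Pi.single_apply, Pi.single_apply]
      split <;> simp
    rw [this, bsTrans_single, add_neg_cancel]
    funext i
    rw [← bsVec_cast]
    rfl
  | same s g hg ih =>
    obtain ⟨D, x, y, hD, h⟩ := ih
    obtain ⟨y', hy'⟩ := bs_step (q := q) T s (fun i => bsVec ℤ q s i + T * y i)
      (bsForm ℤ q s y) (by
        have : (fun i => bsVec ℤ q s i + T * y i) = bsVec ℤ q s + T • y := rfl
        rw [this, map_add, map_smul, bsForm_vec, smul_eq_mul])
    refine ⟨D + 1, x, y', Nat.succ_pos _, fun M => ?_⟩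
    rw [← hy' (R M) (τ M) (hτ M), map_mul, Units.val_mul, Module.End.mul_apply, fb, ← h M,
      map_smul, smul_smul, pow_succ']
  | alt s t i g hi hg ih =>
    obtain ⟨D, x, y, hD, h⟩ := ih
    have hi0 : (i : ZMod q) ≠ 0 := by
      rwa [Ne, ZMod.intCast_zmod_eq_zero_iff_dvd]
    have e : bsTrans ℤ q i (fun j => bsVec ℤ q t j + T * y j)
        = Pi.single ((i : ZMod q), t) 1 + T • bsTrans ℤ q i y := by
      have : (fun j => bsVec ℤ q t j + T * y j) = bsVec ℤ q t + T • y := rfl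
      rw [this, map_add, map_smul, bsVec, bsTrans_single, add_zero]
    obtain ⟨y', hy'⟩ := bs_step (q := q) T s (bsTrans ℤ q i (fun j => bsVec ℤ q t j + T * y j))
      (bsForm ℤ q s (bsTrans ℤ q i y)) (by
        rw [e, map_add, map_smul, bsForm_single _ _ _ (Or.inl hi0), smul_eq_mul])
    refine ⟨D + 1, x, y', Nat.succ_pos _, fun M => ?_⟩
    rw [← hy' (R M) (τ M) (hτ M), map_mul, Units.val_mul, Module.End.mul_apply, fb, map_mul,
      Units.val_mul, Module.End.mul_apply, fa, pow_succ', mul_smul]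
    congr 1
    rw [← map_smul, ← map_smul, h M]
    rfl

/-- Elements outside `⟨a⟩` are separated from `⟨a⟩` in `p`-quotients. -/
theorem BS.sep_A {p : ℕ} (hp : p.Prime) (r : ℕ) {ε : ℤ} (hε : ε = 1 ∨ ε = -1)
    {l m : ℤ} (hl : l = (p : ℤ) ^ r) (hm : m = ε * (p : ℤ) ^ r) (g : BS l m)
    (hg : ∀ k : ℤ, g ≠ BS.a l m ^ k) :
    ∃ N : Subgroup (BS l m), N.Normal ∧ (∃ k : ℕ, N.index = p ^ k) ∧
      ∀ k : ℤ, (BS.a l m ^ k)⁻¹ * g ∉ N := by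
  have : NeZero (p ^ r) := ⟨pow_ne_zero _ hp.ne_zero⟩
  have hp2 := hp.two_le
  have hu : ∀ M : ℕ, ∃ τ : (ZMod (p ^ M))ˣ, (τ : ZMod (p ^ M)) = 1 + p := by
    intro M
    have h1 : IsNilpotent (p : ZMod (p ^ M)) :=
      ⟨M, by rw [← Nat.cast_pow, ZMod.natCast_self]⟩
    exact h1.isUnit_one_add
  choose τ hτ using hu
  have hl' : l = (p ^ r : ℕ) := by rw [hl]; push_cast; rfl
  have hm' : m = ε * (p ^ r : ℕ) := by rw [hm]; push_cast; rfl
  have hrep := fun M => exists_bsRep (q := p ^ r) (τ M) hl' hm'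
  choose f fa fb using hrep
  rcases BS.cover (q := p ^ r) hε hl' hm' g with ⟨k, hk⟩ | ⟨s, i, g', hg', rfl⟩
  · exact absurd hk (hg k)
  obtain ⟨D, x, y, hD, h⟩ := bs_good (T := 1 + p) τ (by intro M; rw [hτ]; push_cast; rfl)
    f fa fb hg'
  set z : ℤ := bsVec ℤ (p ^ r) s (0, s) + (1 + p) * y (0, s) with hz
  have hz1 : z = 1 + (1 + p) * y (0, s) := by
    rw [hz, bsVec, Pi.single_eq_same]
  set C : ℤ := |z| + (1 + p) ^ D * ∑ j, |x j| with hC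
  obtain ⟨M, hM⟩ : ∃ M : ℕ, C < (p : ℤ) ^ M := by
    obtain ⟨M, hM⟩ := pow_unbounded_of_one_lt C (show (1 : ℤ) < p by exact_mod_cast hp.one_lt)
    exact ⟨M, hM⟩
  have : NeZero (p ^ M) := ⟨pow_ne_zero _ hp.ne_zero⟩
  refine ⟨(f M).ker, inferInstance, ?_, ?_⟩
  · have hfin : Finite (Module.End (ZMod (p ^ M)) (ZMod (p ^ r) × Bool → ZMod (p ^ M))) :=
      Finite.of_injective _ DFunLike.coe_injective
    exact ker_index_pow hp (f M) (bsRep_pgroup r (τ M) (hτ M) (f M) (fa M) (fb M))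
  · intro k hk
    have hk' : f M g' = f M (BS.a l m ^ (k - i)) := by
      rw [MonoidHom.mem_ker, ← mul_assoc, ← zpow_neg, ← zpow_add, map_mul,
        mul_eq_one_iff_inv_eq, ← map_inv, ← zpow_neg] at hk
      rw [← hk]
      congr 2
      ring
    have h1 := congrFun (h M) (0, s)
    rw [hk', fa M] at h1
    simp only [Pi.smul_apply, smul_eq_mul, bsTrans, LinearMap.funLeft_apply] at h1
    set j : ZMod (p ^ r) × Bool := (0 - ((k - i : ℤ) : ZMod (p ^ r)), s) with hj
    rw [← hz] at h1
    have h2 : (((1 + p) ^ D * x j - z : ℤ) : ZMod (p ^ M)) = 0 := by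
      rw [Int.cast_sub, ← h1]; push_cast; ring
    rw [ZMod.intCast_zmod_eq_zero_iff_dvd] at h2
    have h3 : |(1 + (p : ℤ)) ^ D * x j - z| ≤ C := by
      have h4 : |x j| ≤ ∑ j, |x j| :=
        Finset.single_le_sum (f := fun j => |x j|) (fun _ _ => abs_nonneg _) (Finset.mem_univ j)
      calc |(1 + (p : ℤ)) ^ D * x j - z| ≤ |(1 + (p : ℤ)) ^ D * x j| + |z| := abs_sub _ _
        _ = |z| + (1 + (p : ℤ)) ^ D * |x j| := by
          rw [abs_mul, abs_of_nonneg (by positivity : (0 : ℤ) ≤ (1 + (p : ℤ)) ^ D), add_comm]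
        _ ≤ C := by
          rw [hC]
          gcongr
    have h5 : (1 + (p : ℤ)) ^ D * x j - z = 0 := by
      apply Int.eq_zero_of_abs_lt_dvd h2
      push_cast
      exact lt_of_le_of_lt h3 hM
    have h6 : (1 + (p : ℤ)) ∣ 1 := by
      have h7 : (1 + (p : ℤ)) ∣ (1 + (p : ℤ)) ^ D * x j := (dvd_pow_self _ hD.ne').mul_right _
      have h8 : (1 : ℤ) = (1 + (p : ℤ)) ^ D * x j - (1 + p) * y (0, s) := by
        rw [hz1] at h5; linarith
      have h9 := dvd_sub h7 (dvd_mul_right (1 + (p : ℤ)) (y (0, s)))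
      rwa [← h8] at h9
    have := Int.le_of_dvd one_pos h6
    have : (2 : ℤ) ≤ p := by exact_mod_cast hp2
    linarith

/-! ### Conclusion -/

theorem BS.resid {p : ℕ} (hp : p.Prime) (r : ℕ) {ε : ℤ} (hε : ε = 1 ∨ ε = -1)
    (hp2 : ε = -1 → p = 2)
    {l m : ℤ} (hl : l = (p : ℤ) ^ r) (hm : m = ε * (p : ℤ) ^ r) (g : BS l m) (hg : g ≠ 1) :
    ∃ N : Subgroup (BS l m), N.Normal ∧ (∃ k : ℕ, N.index = p ^ k) ∧ g ∉ N := by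
  by_cases h : ∀ k : ℤ, g ≠ BS.a l m ^ k
  · obtain ⟨N, h1, h2, h3⟩ := BS.sep_A hp r hε hl hm g h
    exact ⟨N, h1, h2, by simpa using h3 0⟩
  · push Not at h
    obtain ⟨k, rfl⟩ := h
    have hk : k ≠ 0 := by rintro rfl; simp at hg
    obtain ⟨u, hu⟩ := pow_unbounded_of_one_lt |k| (show (1 : ℤ) < p by exact_mod_cast hp.one_lt)
    obtain ⟨K, h1, h2, h3⟩ := BS.exists_K hp r hε hp2 hl hm u 1 le_rfl
    refine ⟨K, h1, h2, fun hmem => ?_⟩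
    have := (h3 k 0).1 (by simpa using hmem)
    exact hk (Int.eq_zero_of_abs_lt_dvd this.1 hu)

theorem BS.sep_B {p : ℕ} (hp : p.Prime) (r : ℕ) {ε : ℤ} (hε : ε = 1 ∨ ε = -1)
    (hp2 : ε = -1 → p = 2)
    {l m : ℤ} (hl : l = (p : ℤ) ^ r) (hm : m = ε * (p : ℤ) ^ r) (g : BS l m)
    (hg : g ∉ Subgroup.zpowers (BS.b l m)) :
    ∃ N : Subgroup (BS l m), N.Normal ∧ (∃ k : ℕ, N.index = p ^ k) ∧
      ∀ k : ℤ, (BS.b l m ^ k)⁻¹ * g ∉ N := by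
  obtain ⟨e, ea, eb⟩ := BS.exists_lift (l := l) (m := m) (H := Subgroup.zpowers (BS.b l m))
    1 ⟨BS.b l m, Subgroup.mem_zpowers _⟩ (by simp)
  set ρ : BS l m →* BS l m := (Subgroup.zpowers (BS.b l m)).subtype.comp e with hρ
  have hρb : ρ (BS.b l m) = BS.b l m := by simp [hρ, eb]
  obtain ⟨M, h1, ⟨i, h2⟩, h3⟩ := BS.resid hp r hε hp2 hl hm (g * (ρ g)⁻¹) (by
    intro h
    rw [mul_inv_eq_one] at h
    exact hg (h ▸ (e g).2))
  obtain ⟨j, hj⟩ := comap_index_pow hp ρ h1 h2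
  have h1' : (M.comap ρ).Normal := inferInstance
  refine ⟨M ⊓ M.comap ρ, inferInstance, inf_index_pow hp h1 h2 hj, fun k hk => h3 ?_⟩
  obtain ⟨hk1, hk2⟩ := hk
  have hk3 : ρ ((BS.b l m ^ k)⁻¹ * g) ∈ M := hk2
  rw [map_mul, map_inv, map_zpow, hρb] at hk3
  have := h1.conj_mem _ (M.mul_mem hk1 (M.inv_mem hk3)) (BS.b l m ^ k)
  convert this using 1
  group

/-- **Lemma 3.1.** Let `G = ⟨a, b; b⁻¹a^{pʳ}b = a^{ε·pʳ}⟩` with `ε = ±1` (and `p = 2` if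
`ε = -1`), let `A₁ = ⟨a^{pˢ}⟩` and `B = ⟨b⟩`, and let `φ : A₁ ≃* B` be the isomorphism with
`φ(a^{pˢ}) = b`. Then the family of all normal `(A₁,B,φ)`-compatible subgroups of `G` of
finite `p`-power index is an `(A₁,B)`-filtration: the intersection of all its members is
trivial and the intersections `∩_N A₁N = A₁` and `∩_N BN = B` hold. -/
theorem bs_compatible_normal_family_filtration
    (p : ℕ) (hp : p.Prime) (r s : ℕ) (ε : ℤ) (hε : ε = 1 ∨ ε = -1)
    (hp2 : ε = -1 → p = 2)
    (l m : ℤ) (hl : l = (p : ℤ) ^ r) (hm : m = ε * (p : ℤ) ^ r)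
    (A₁ B : Subgroup (BS l m))
    (hA₁ : A₁ = Subgroup.zpowers (BS.a l m ^ p ^ s))
    (hB : B = Subgroup.zpowers (BS.b l m))
    (φ : A₁ ≃* B)
    (hφ : ∀ x : A₁, (x : BS l m) = BS.a l m ^ p ^ s → (φ x : BS l m) = BS.b l m) :
    sInf {N : Subgroup (BS l m) | N.Normal ∧ Compatible φ N ∧ ∃ k : ℕ, N.index = p ^ k} = ⊥ ∧
    (⨅ N ∈ {N : Subgroup (BS l m) | N.Normal ∧ Compatible φ N ∧ ∃ k : ℕ, N.index = p ^ k},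
      A₁ ⊔ N) = A₁ ∧
    (⨅ N ∈ {N : Subgroup (BS l m) | N.Normal ∧ Compatible φ N ∧ ∃ k : ℕ, N.index = p ^ k},
      B ⊔ N) = B := by
  subst hA₁ hB
  have hφj : ∀ (j : ℤ) (x : Subgroup.zpowers (BS.a l m ^ p ^ s)),
      (x : BS l m) = (BS.a l m ^ p ^ s) ^ j → (φ x : BS l m) = BS.b l m ^ j := by
    intro j x hx
    have h0 := hφ ⟨_, Subgroup.mem_zpowers _⟩ rfl
    have h1 : x = ⟨BS.a l m ^ p ^ s, Subgroup.mem_zpowers _⟩ ^ j := Subtype.ext (by simp [hx])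
    rw [h1, map_zpow, Subgroup.coe_zpow, h0]
  have key : ∀ M : Subgroup (BS l m), M.Normal → (∃ k : ℕ, M.index = p ^ k) →
      ∃ N ∈ {N : Subgroup (BS l m) | N.Normal ∧ Compatible φ N ∧ ∃ k : ℕ, N.index = p ^ k},
        N ≤ M := by
    rintro M hM ⟨t, ht⟩
    obtain ⟨K, hK1, ⟨k, hk⟩, hK2⟩ := BS.exists_K hp r hε hp2 hl hm (t + 1 + s) (t + 1) (by omega)
    have hMpow : ∀ (x : BS l m) (j : ℤ), (p : ℤ) ^ (t + 1) ∣ j → x ^ j ∈ M := by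
      rintro x j ⟨c, rfl⟩
      rw [pow_succ, mul_assoc, zpow_mul]
      apply M.zpow_mem
      have := M.pow_index_mem x
      rw [ht] at this
      exact_mod_cast this
    have e1 : ∀ j : ℤ, (BS.a l m ^ p ^ s) ^ j ∈ M ⊓ K ↔ (p : ℤ) ^ (t + 1) ∣ j := by
      intro j
      have e : (BS.a l m ^ p ^ s) ^ j = BS.a l m ^ ((p : ℤ) ^ s * j) * BS.b l m ^ (0 : ℤ) := by
        rw [zpow_mul, zpow_zero, mul_one]; norm_cast
      have hpz : (p : ℤ) ^ s ≠ 0 := pow_ne_zero _ (by exact_mod_cast hp.ne_zero)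
      have e' : (BS.a l m ^ p ^ s) ^ j ∈ K ↔ (p : ℤ) ^ (t + 1) ∣ j := by
        rw [e, hK2, pow_add, mul_comm ((p : ℤ) ^ (t + 1)), mul_dvd_mul_iff_left hpz]
        simp
      rw [Subgroup.mem_inf, e']
      exact ⟨fun h => h.2, fun h => ⟨hMpow _ _ h, h⟩⟩
    have e2 : ∀ j : ℤ, BS.b l m ^ j ∈ M ⊓ K ↔ (p : ℤ) ^ (t + 1) ∣ j := by
      intro j
      have e' : BS.b l m ^ j ∈ K ↔ (p : ℤ) ^ (t + 1) ∣ j := by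
        have := hK2 0 j
        simpa using this
      rw [Subgroup.mem_inf, e']
      exact ⟨fun h => h.2, fun h => ⟨hMpow _ _ h, h⟩⟩
    refine ⟨M ⊓ K, ⟨inferInstance, ?_, inf_index_pow hp hM ht hk⟩, inf_le_left⟩
    have e3 : ∀ x : Subgroup.zpowers (BS.a l m ^ p ^ s),
        (φ x : BS l m) ∈ M ⊓ K ↔ (x : BS l m) ∈ M ⊓ K := by
      intro x
      obtain ⟨j, hj⟩ := Subgroup.mem_zpowers_iff.1 x.2
      rw [hφj j x hj.symm, e2, ← hj, e1]
    unfold Compatible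
    ext y
    rw [Subgroup.mem_map, Subgroup.mem_subgroupOf]
    constructor
    · rintro ⟨x, hx, rfl⟩
      exact (e3 x).2 hx
    · intro hy
      refine ⟨φ.symm y, ?_, φ.apply_symm_apply y⟩
      rw [Subgroup.mem_subgroupOf, ← e3, φ.apply_symm_apply]
      exact hy
  refine ⟨?_, ?_, ?_⟩
  · rw [eq_bot_iff]
    intro x hx
    rw [Subgroup.mem_bot]
    by_contra hx1
    obtain ⟨M, h1, h2, h3⟩ := BS.resid hp r hε hp2 hl hm x hx1
    obtain ⟨N, hN, hNM⟩ := key M h1 h2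
    exact h3 (hNM (Subgroup.mem_sInf.1 hx N hN))
  · refine le_antisymm ?_ (le_iInf₂ fun N _ => le_sup_left)
    intro x hx
    by_contra hxA
    rw [Subgroup.mem_iInf] at hx
    have hx' : ∀ M : Subgroup (BS l m), M.Normal → (∃ k : ℕ, M.index = p ^ k) →
        ∃ k : ℤ, ((BS.a l m ^ p ^ s) ^ k)⁻¹ * x ∈ M := by
      intro M h1 h2
      obtain ⟨N, hN, hNM⟩ := key M h1 h2
      have h3 := Subgroup.mem_iInf.1 (hx N) hN
      have := hN.1
      obtain ⟨y, hy, n, hn, rfl⟩ := Subgroup.mem_sup_of_normal_right.1 h3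
      obtain ⟨k, rfl⟩ := Subgroup.mem_zpowers_iff.1 hy
      exact ⟨k, by rw [inv_mul_cancel_left]; exact hNM hn⟩
    have hpk : ∀ k : ℤ, (BS.a l m ^ p ^ s) ^ k = BS.a l m ^ ((p : ℤ) ^ s * k) := by
      intro k
      rw [zpow_mul]; norm_cast
    by_cases h : ∀ k : ℤ, x ≠ BS.a l m ^ k
    · obtain ⟨M, h1, h2, h3⟩ := BS.sep_A hp r hε hl hm x h
      obtain ⟨k, hk⟩ := hx' M h1 h2
      rw [hpk] at hk
      exact h3 _ hk
    · push Not at h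
      obtain ⟨k, rfl⟩ := h
      obtain ⟨K, h1, h2, h3⟩ := BS.exists_K hp r hε hp2 hl hm s 1 le_rfl
      obtain ⟨j, hj⟩ := hx' K h1 h2
      rw [hpk, ← zpow_neg, ← zpow_add] at hj
      have h4 := ((h3 (-((p : ℤ) ^ s * j) + k) 0).1 (by simpa using hj)).1
      have h5 : (p : ℤ) ^ s ∣ k := by
        have := dvd_add h4 (dvd_mul_right ((p : ℤ) ^ s) j)
        simpa using this
      obtain ⟨c, rfl⟩ := h5
      exact hxA (Subgroup.mem_zpowers_iff.2 ⟨c, hpk c⟩)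
  · refine le_antisymm ?_ (le_iInf₂ fun N _ => le_sup_left)
    intro x hx
    by_contra hxB
    rw [Subgroup.mem_iInf] at hx
    obtain ⟨M, h1, h2, h3⟩ := BS.sep_B hp r hε hp2 hl hm x hxB
    obtain ⟨N, hN, hNM⟩ := key M h1 h2
    have h4 := Subgroup.mem_iInf.1 (hx N) hN
    have := hN.1
    obtain ⟨y, hy, n, hn, rfl⟩ := Subgroup.mem_sup_of_normal_right.1 h4
    obtain ⟨k, rfl⟩ := Subgroup.mem_zpowers_iff.1 hy
    exact h3 k (by rw [inv_mul_cancel_left]; exact hNM hn)
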